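/- arXiv:1007.0189 — 2 statements merged into one kernel-verified Lean document; each statement's English description precedes it below -/
import Mathlib

section
/- Let (X,T) be a minimal dynamical system on a compact metric space and d ≥ 1. If (x,y) ∈ RP^[d](X), then the point (x, y, y, ..., y) ∈ X^{2^{d+1}} (first coordinate x, all other 2^{d+1}−1 coordinates y) belongs to Q^[d+1](X). -/
/-!
The set `βℤ` of ultrafilters on `ℤ` is a compact right topological semigroup and acts on `X` by
`p x = lim_{n → p} T^n x`. In the same way `βℤ^d` acts on cubes `z ∈ X^{2^d}`, at the vertex `ε`
through the image `proj ε q` of `q` under `n ↦ n · ε`; this is the enveloping semigroup of the face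
group, it fixes the origin coordinate, and it preserves `Q^[d]`.

The main step is `exists_to_diag`: every `z ∈ Q^[d]` is carried by some `q ∈ βℤ^d` to the diagonal
point of its origin coordinate. Its proof is by induction on `d`.
* By the induction hypothesis, one facet of `z` may be assumed constant, equal to `x`.
* By Baire category (`exists_generic`) there is a base point `x₀` such that every cube with origin
  `x₀` is in the face orbit closure of the diagonal point of `x₀`. Some `p ∈ βℤ` moves the origin
  of `z` from `x` to `x₀`.
* Cubes fixed by an idempotent of a minimal left ideal of `βℤ` are minimal for the face group
  (`exists_return`, which rests on the Ellis theorem in `βℤ^d`). So `p z` is carried back to the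
  diagonal point of `x₀`.
* These maps are undone on the constant facet by a face transformation acting in parallel on both
  facets, and the other facet is then moved from `x₀` to `x`. The algebra of idempotents in
  `exists_ideal_elements` guarantees that the result is exactly the diagonal point of `x`.

If `(x, y) ∈ RP^[d]`, a limit of the cubes witnessing this is an element of `Q^[d+1]` with facets
`(x, a)` and `(y, a)`, having the same coordinates `a` away from the two origins
(`exists_cube_of_RP`). By `exists_to_diag` some `q ∈ βℤ^d` collapses the facet `(y, a)` to the
constant `y`. Applying `q` in parallel to both facets gives `(x, y, ..., y)`.
-/

/-- The regionally proximal relation of order `d`. -/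
def RP {X : Type*} [MetricSpace X] (T : X ≃ₜ X) (d : ℕ) : Set (X × X) :=
  {p | ∀ δ > (0 : ℝ), ∃ x' y' : X, ∃ n : Fin d → ℤ,
    dist p.1 x' < δ ∧ dist p.2 y' < δ ∧
    ∀ ε : Fin d → Bool, ε ≠ (fun _ => false) →
      dist ((T.toEquiv ^ (∑ i, if ε i then n i else 0)) x')
           ((T.toEquiv ^ (∑ i, if ε i then n i else 0)) y') < δ}

/-- The dynamical parallelepiped set `Q^[d](X)`. -/
def Qcube {X : Type*} [TopologicalSpace X] (T : X ≃ₜ X) (d : ℕ) :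
    Set ((Fin d → Bool) → X) :=
  closure {y | ∃ (x : X) (n : Fin d → ℤ),
    y = fun ε => (T.toEquiv ^ (∑ i, if ε i then n i else 0)) x}

attribute [local instance] Ultrafilter.add Ultrafilter.addSemigroup

namespace CornerQ

open Filter Topology

/-! ### Minimal left ideals of compact right topological semigroups -/

section Semigroup

variable {S : Type*} [AddSemigroup S]

/-- `a` generates a minimal left ideal of `S`: every `q + a` can be brought back to `a` by a
left translation. -/
def IsMin (a : S) : Prop := ∀ q : S, ∃ q' : S, q' + (q + a) = a

lemma IsMin.add_left {a : S} (h : IsMin a) (s : S) : IsMin (s + a) := by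
  intro q
  obtain ⟨q', hq'⟩ := h (q + s)
  refine ⟨s + q', ?_⟩
  rw [add_assoc s, ← add_assoc q s a, hq']

/-- An idempotent of a minimal left ideal `S + u` is a right identity on that ideal. -/
lemma IsMin.add_eq_self {u v : S} (hu : IsMin u) (hv : v + v = v)
    (hvu : ∃ s, v = s + u) : u + v = u := by
  obtain ⟨s, rfl⟩ := hvu
  obtain ⟨t, ht⟩ := hu s
  calc u + (s + u) = t + (s + u) + (s + u) := by rw [ht]
    _ = t + ((s + u) + (s + u)) := by rw [add_assoc]
    _ = u := by rw [hv, ht]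

variable [TopologicalSpace S] [CompactSpace S] [T2Space S]

/-- In a compact right topological semigroup every left ideal `S + b` contains an idempotent that
lies in a minimal left ideal. -/
lemma exists_isMin_idempotent (hc : ∀ r : S, Continuous (· + r)) (b : S) :
    ∃ s : S, IsMin (s + b) ∧ (s + b) + (s + b) = s + b := by
  let C : Set (Set S) := {N | IsClosed N ∧ N.Nonempty ∧ ∀ s : S, ∀ m ∈ N, s + m ∈ N}
  have hI : ∀ a : S, Set.range (fun s => s + a) ∈ C := by
    intro a
    refine ⟨(isCompact_range (hc a)).isClosed, ⟨_, a, rfl⟩, ?_⟩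
    rintro s _ ⟨t, rfl⟩
    exact ⟨s + t, add_assoc _ _ _⟩
  obtain ⟨M, hMb, hM⟩ : ∃ M, M ⊆ Set.range (fun s => s + b) ∧ Minimal (· ∈ C) M := by
    refine zorn_superset_nonempty C ?_ _ (hI b)
    intro c hcs hch hcn
    refine ⟨⋂₀ c, ⟨isClosed_sInter fun t ht => (hcs ht).1, ?_, ?_⟩,
      fun s hs => Set.sInter_subset_of_mem hs⟩
    · have := hcn.coe_sort
      rw [Set.sInter_eq_iInter]
      exact IsCompact.nonempty_iInter_of_directed_nonempty_isCompact_isClosed _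
        (DirectedOn.directed_val (IsChain.directedOn hch.symm))
        (fun i => (hcs i.2).2.1) (fun i => (hcs i.2).1.isCompact) (fun i => (hcs i.2).1)
    · intro s m hm
      rw [Set.mem_sInter] at hm ⊢
      exact fun t ht => (hcs ht).2.2 s m (hm t ht)
  obtain ⟨m, hmM, hmm⟩ := exists_idempotent_in_compact_add_subsemigroup hc M hM.prop.2.1
    hM.prop.1.isCompact (fun x _ y hy => hM.prop.2.2 x y hy)
  obtain ⟨s, rfl⟩ := hMb hmM
  refine ⟨s, ?_, hmm⟩
  intro q
  have hsub : Set.range (fun t => t + (q + (s + b))) ⊆ M := by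
    rintro _ ⟨t, rfl⟩
    exact hM.prop.2.2 _ _ (hM.prop.2.2 _ _ hmM)
  have heq := hM.eq_of_subset (hI (q + (s + b))) hsub
  have : s + b ∈ Set.range (fun t => t + (q + (s + b))) := by rw [heq]; exact hmM
  exact this

end Semigroup

/-! ### The semigroups `βℤ` and `βℤ^d` and the face exponents -/

section Proj

lemma add_continuous_left {M : Type*} [AddMonoid M] (r : Ultrafilter M) :
    Continuous (fun p : Ultrafilter M => p + r) := Ultrafilter.continuous_add_left r

lemma map_add {M N : Type*} [AddMonoid M] [AddMonoid N] (φ : M → N)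
    (hφ : ∀ a b, φ (a + b) = φ a + φ b) (p q : Ultrafilter M) :
    (p + q).map φ = p.map φ + q.map φ := by
  refine Ultrafilter.coe_inj.mp (Filter.ext' fun P => ?_)
  rw [Ultrafilter.eventually_add]
  change (∀ᶠ m in ↑(p + q), P (φ m)) ↔ ∀ᶠ m in p, ∀ᶠ m' in q, P (φ m + φ m')
  rw [Ultrafilter.eventually_add]
  simp only [hφ]

lemma pure_zero_add {M : Type*} [AddMonoid M] (p : Ultrafilter M) :
    (pure 0 : Ultrafilter M) + p = p := by
  refine Ultrafilter.coe_inj.mp (Filter.ext' fun P => ?_)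
  rw [Ultrafilter.eventually_add]
  change (∀ᶠ m' in p, P (0 + m')) ↔ _
  simp only [zero_add]

lemma add_pure_zero {M : Type*} [AddMonoid M] (p : Ultrafilter M) :
    p + (pure 0 : Ultrafilter M) = p := by
  refine Ultrafilter.coe_inj.mp (Filter.ext' fun P => ?_)
  rw [Ultrafilter.eventually_add]
  change (∀ᶠ m in p, P (m + 0)) ↔ _
  simp only [add_zero]

/-- The exponent `n · ε` of `T` at the vertex `ε` of the cube. -/
def dot {d : ℕ} (ε : Fin d → Bool) (n : Fin d → ℤ) : ℤ := ∑ i, if ε i then n i else 0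

lemma dot_add {d : ℕ} (ε : Fin d → Bool) (m n : Fin d → ℤ) :
    dot ε (m + n) = dot ε m + dot ε n := by
  simp only [dot, ← Finset.sum_add_distrib]
  refine Finset.sum_congr rfl fun i _ => ?_
  split_ifs <;> simp

lemma dot_false {d : ℕ} (n : Fin d → ℤ) : dot (fun _ => false) n = 0 := by simp [dot]

lemma dot_zero {d : ℕ} (ε : Fin d → Bool) : dot ε 0 = 0 := by simp [dot]

lemma dot_cons {d : ℕ} (b : Bool) (ε : Fin d → Bool) (k : ℤ) (n : Fin d → ℤ) :
    dot (Fin.cons b ε : Fin (d + 1) → Bool) (Fin.cons k n : Fin (d + 1) → ℤ) =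
      (if b then k else 0) + dot ε n := by
  simp [dot, Fin.sum_univ_succ]

lemma dot_cons_tail {d : ℕ} (b : Bool) (ε : Fin d → Bool) (n : Fin (d + 1) → ℤ) :
    dot (Fin.cons b ε : Fin (d + 1) → Bool) n = (if b then n 0 else 0) + dot ε (Fin.tail n) := by
  conv_lhs => rw [← Fin.cons_self_tail n, dot_cons]

/-- The image in `βℤ` of an element of `βℤ^d` at the vertex `ε`: the exponent with which the
completed face group acts on the coordinate `ε`. -/
def proj {d : ℕ} (ε : Fin d → Bool) (q : Ultrafilter (Fin d → ℤ)) : Ultrafilter ℤ :=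
  q.map (dot ε)

lemma proj_add {d : ℕ} (ε : Fin d → Bool) (p q : Ultrafilter (Fin d → ℤ)) :
    proj ε (p + q) = proj ε p + proj ε q := map_add _ (dot_add ε) p q

lemma proj_false {d : ℕ} (q : Ultrafilter (Fin d → ℤ)) :
    proj (fun _ => false) q = pure 0 := by
  refine Ultrafilter.coe_inj.mp (Filter.ext' fun P => ?_)
  change (∀ᶠ n in (q : Filter (Fin d → ℤ)), P (dot (fun _ => false) n)) ↔ P 0
  simp only [dot_false, eventually_const]

/-- The face transformations of the `d`-cube, acting in parallel on the two facets
`ε 0 = false` and `ε 0 = true` of the `(d+1)`-cube. -/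
def inflate {d : ℕ} (q : Ultrafilter (Fin d → ℤ)) : Ultrafilter (Fin (d + 1) → ℤ) :=
  q.map (fun n => (Fin.cons 0 n : Fin (d + 1) → ℤ))

/-- The action of `βℤ` on the facet `ε 0 = true`. -/
def facet (d : ℕ) (p : Ultrafilter ℤ) : Ultrafilter (Fin (d + 1) → ℤ) :=
  p.map (fun k => (Fin.cons k 0 : Fin (d + 1) → ℤ))

/-- The restriction of the face transformations of the `(d+1)`-cube to the facet
`ε 0 = false`. -/
def restrict {d : ℕ} (q : Ultrafilter (Fin (d + 1) → ℤ)) : Ultrafilter (Fin d → ℤ) :=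
  q.map Fin.tail

lemma proj_inflate {d : ℕ} (b : Bool) (ε : Fin d → Bool) (q : Ultrafilter (Fin d → ℤ)) :
    proj (Fin.cons b ε : Fin (d + 1) → Bool) (inflate q) = proj ε q := by
  simp only [proj, inflate, Ultrafilter.map_map]
  congr 1
  funext n
  simp [dot_cons]

lemma proj_facet_true {d : ℕ} (ε : Fin d → Bool) (p : Ultrafilter ℤ) :
    proj (Fin.cons true ε : Fin (d + 1) → Bool) (facet d p) = p := by
  simp only [proj, facet, Ultrafilter.map_map]
  convert Ultrafilter.map_id p
  funext n
  simp [dot_cons, dot_zero]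

lemma proj_facet_false {d : ℕ} (ε : Fin d → Bool) (p : Ultrafilter ℤ) :
    proj (Fin.cons false ε : Fin (d + 1) → Bool) (facet d p) = pure 0 := by
  refine Ultrafilter.coe_inj.mp (Filter.ext' fun P => ?_)
  change (∀ᶠ k in p, P (dot (Fin.cons false ε : Fin (d + 1) → Bool)
    (Fin.cons k 0 : Fin (d + 1) → ℤ))) ↔ P 0
  simp [dot_cons, dot_zero]

lemma proj_restrict {d : ℕ} (ε : Fin d → Bool) (q : Ultrafilter (Fin (d + 1) → ℤ)) :
    proj ε (restrict q) = proj (Fin.cons false ε : Fin (d + 1) → Bool) q := by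
  simp only [proj, restrict, Ultrafilter.map_map]
  congr 1
  funext n
  change dot ε (Fin.tail n) = dot (Fin.cons false ε : Fin (d + 1) → Bool) n
  simp [dot_cons_tail]

lemma cons_false_false {d : ℕ} :
    (Fin.cons false (fun _ => false) : Fin (d + 1) → Bool) = fun _ => false := by
  funext i
  refine Fin.cases ?_ (fun j => ?_) i <;> simp

lemma cons_false_ne {d : ℕ} {ε : Fin d → Bool} (h : ε ≠ fun _ => false) :
    (Fin.cons false ε : Fin (d + 1) → Bool) ≠ fun _ => false := by
  intro h'
  apply h
  funext i
  have := congrFun h' i.succ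
  simpa using this

lemma cons_true_ne {d : ℕ} (ε : Fin d → Bool) :
    (Fin.cons true ε : Fin (d + 1) → Bool) ≠ fun _ => false := by
  intro h'
  have := congrFun h' 0
  simp at this

/-- Multiplying an idempotent over all the facets `ε i = true` gives a face transformation that
acts by this idempotent at every vertex except the origin. -/
lemma exists_star {u : Ultrafilter ℤ} (hu : u + u = u) (d : ℕ) :
    ∃ q : Ultrafilter (Fin d → ℤ), ∀ ε, ε ≠ (fun _ => false) → proj ε q = u := by
  induction d with
  | zero => exact ⟨pure 0, fun ε h => absurd (Subsingleton.elim _ _) h⟩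
  | succ d ih =>
    obtain ⟨q, hq⟩ := ih
    refine ⟨facet d u + inflate q, fun ε hε => ?_⟩
    obtain ⟨b, ε', rfl⟩ : ∃ b ε', ε = (Fin.cons b ε' : Fin (d + 1) → Bool) :=
      ⟨_, _, (Fin.cons_self_tail ε).symm⟩
    rw [proj_add, proj_inflate]
    by_cases h : ε' = fun _ => false
    · subst h
      rw [proj_false, add_pure_zero]
      cases b with
      | true => exact proj_facet_true _ _
      | false => exact absurd cons_false_false hε
    · rw [hq ε' h]
      cases b with
      | true => rw [proj_facet_true, hu]
      | false => rw [proj_facet_false, pure_zero_add]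

/-- Minimality under the face group: for an idempotent `u` of a minimal left ideal of `βℤ`, the
effect of any `q` on coordinates fixed by `u` is undone by some `q'`, simultaneously at all vertices
other than the origin. So a cube whose coordinates other than the origin are fixed by `u` is a
minimal point of the face group action. -/
lemma exists_return {u : Ultrafilter ℤ} (hu : u + u = u) (hmin : IsMin u) (d : ℕ)
    (q : Ultrafilter (Fin d → ℤ)) :
    ∃ q' : Ultrafilter (Fin d → ℤ), ∀ ε, ε ≠ (fun _ => false) →
      proj ε q' + (proj ε q + u) = u := by
  obtain ⟨us, hus⟩ := exists_star hu d
  obtain ⟨s, hs, hidem⟩ := exists_isMin_idempotent add_continuous_left us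
  obtain ⟨q'', hq''⟩ := hs (q + us)
  refine ⟨us + q'', fun ε hε => ?_⟩
  have h1 : u + proj ε (s + us) = u := by
    apply hmin.add_eq_self
    · rw [← proj_add, hidem]
    · exact ⟨proj ε s, by rw [proj_add, hus ε hε]⟩
  have h2 := congrArg (proj ε) hq''
  rw [proj_add, proj_add, proj_add ε q us, hus ε hε] at h2
  rw [proj_add, hus ε hε]
  calc u + proj ε q'' + (proj ε q + u)
      = u + proj ε q'' + (proj ε q + (u + proj ε (s + us))) := by rw [h1]
    _ = u + (proj ε q'' + (proj ε q + u + proj ε (s + us))) := by simp only [add_assoc]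
    _ = u := by rw [h2, h1]

end Proj

/-! ### The action of `βℤ` on the system -/

section Action

variable {X : Type*} [MetricSpace X] (T : X ≃ₜ X)

lemma continuous_zpow (n : ℤ) : Continuous (fun x => (T.toEquiv ^ n) x) := by
  have hpow : ∀ (S : X ≃ₜ X) (k : ℕ), Continuous (fun x => (S.toEquiv ^ k) x) := by
    intro S k
    induction k with
    | zero => exact continuous_id
    | succ k ih =>
      have h := ih.comp S.continuous
      simp only [pow_succ]
      exact h
  cases n with
  | ofNat k => simpa using hpow T k
  | negSucc k =>
    have h := hpow T.symm (k + 1)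
    convert h using 3
    rw [zpow_negSucc, ← inv_pow]
    rfl

lemma zpow_add_apply (m n : ℤ) (x : X) :
    (T.toEquiv ^ (m + n)) x = (T.toEquiv ^ m) ((T.toEquiv ^ n) x) := by
  rw [zpow_add]; rfl

section Q

variable {T}

lemma Qcube_zpow {d : ℕ} {z : (Fin d → Bool) → X} (hz : z ∈ Qcube T d) (m : Fin d → ℤ) :
    (fun ε => (T.toEquiv ^ dot ε m) (z ε)) ∈ Qcube T d := by
  refine map_mem_closure
    (f := fun (z : (Fin d → Bool) → X) ε => (T.toEquiv ^ dot ε m) (z ε)) ?_ hz ?_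
  · exact continuous_pi fun ε => (continuous_zpow T _).comp (continuous_apply ε)
  · rintro _ ⟨x, n, rfl⟩
    refine ⟨x, m + n, funext fun ε => ?_⟩
    change (T.toEquiv ^ dot ε m) ((T.toEquiv ^ dot ε n) x) = (T.toEquiv ^ dot ε (m + n)) x
    rw [dot_add, zpow_add_apply]

lemma Qcube_facet {d : ℕ} {z : (Fin (d + 1) → Bool) → X} (hz : z ∈ Qcube T (d + 1))
    (b : Bool) : (fun ε : Fin d → Bool => z (Fin.cons b ε)) ∈ Qcube T d := by
  refine map_mem_closure
    (f := fun (z : (Fin (d + 1) → Bool) → X) (ε : Fin d → Bool) => z (Fin.cons b ε)) ?_ hz ?_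
  · exact continuous_pi fun ε => continuous_apply _
  · rintro _ ⟨x, n, rfl⟩
    refine ⟨(T.toEquiv ^ (if b then n 0 else 0)) x, Fin.tail n, funext fun ε => ?_⟩
    change (T.toEquiv ^ dot (Fin.cons b ε : Fin (d + 1) → Bool) n) x =
      (T.toEquiv ^ dot ε (Fin.tail n)) ((T.toEquiv ^ (if b then n 0 else 0)) x)
    rw [← zpow_add_apply, dot_cons_tail, add_comm (dot ε (Fin.tail n))]

end Q

variable [CompactSpace X]

/-- The action of `βℤ` on `X`: `act T p x` is the limit of `T^n x` along `p`. -/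
noncomputable def act (p : Ultrafilter ℤ) (x : X) : X :=
  Ultrafilter.extend (fun n : ℤ => (T.toEquiv ^ n) x) p

lemma tendsto_act (p : Ultrafilter ℤ) (x : X) :
    Tendsto (fun n : ℤ => (T.toEquiv ^ n) x) p (𝓝 (act T p x)) :=
  ultrafilter_extend_eq_iff.mp rfl

lemma act_eq {p : Ultrafilter ℤ} {x c : X}
    (h : Tendsto (fun n : ℤ => (T.toEquiv ^ n) x) p (𝓝 c)) : act T p x = c :=
  ultrafilter_extend_eq_iff.mpr h

lemma continuous_act (x : X) : Continuous (fun p => act T p x) :=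
  continuous_ultrafilter_extend _

lemma act_pure (n : ℤ) (x : X) : act T (pure n) x = (T.toEquiv ^ n) x :=
  act_eq T (tendsto_pure_nhds (fun n : ℤ => (T.toEquiv ^ n) x) n)

lemma act_pure_zero (x : X) : act T (pure 0) x = x := by
  rw [act_pure]; simp

lemma act_add (p q : Ultrafilter ℤ) (x : X) : act T (p + q) x = act T p (act T q x) := by
  apply act_eq
  intro V hV
  obtain ⟨W, hWV, hW, hcW⟩ := mem_nhds_iff.mp hV
  have h1 : ∀ᶠ m in (p : Filter ℤ), (T.toEquiv ^ m) (act T q x) ∈ W :=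
    tendsto_act T p (act T q x) (hW.mem_nhds hcW)
  have h2 : ∀ᶠ k in (↑(p + q) : Filter ℤ), (T.toEquiv ^ k) x ∈ V := by
    rw [Ultrafilter.eventually_add]
    filter_upwards [h1] with m hm
    have h3 := ((continuous_zpow T m).tendsto (act T q x)).comp (tendsto_act T q x)
    filter_upwards [h3 (hW.mem_nhds hm)] with n hn
    rw [zpow_add_apply]
    exact hWV hn
  exact h2

lemma tendsto_proj {d : ℕ} (q : Ultrafilter (Fin d → ℤ)) (ε : Fin d → Bool) (x : X) :
    Tendsto (fun n => (T.toEquiv ^ dot ε n) x) q (𝓝 (act T (proj ε q) x)) :=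
  (tendsto_act T (proj ε q) x).comp (by
    rw [proj, Ultrafilter.coe_map]; exact tendsto_map)

/-- Points of the orbit closure under the face group are given by elements of `βℤ^d`. -/
lemma exists_of_mem_closure {d : ℕ} {x : X} {z : (Fin d → Bool) → X}
    (hz : z ∈ closure (Set.range fun (n : Fin d → ℤ) (ε : Fin d → Bool) =>
      (T.toEquiv ^ dot ε n) x)) :
    ∃ q : Ultrafilter (Fin d → ℤ), ∀ ε, act T (proj ε q) x = z ε := by
  set f := fun (n : Fin d → ℤ) (ε : Fin d → Bool) => (T.toEquiv ^ dot ε n) x with hf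
  have hne : (comap f (𝓝 z)).NeBot := by
    rw [comap_neBot_iff]
    intro t ht
    obtain ⟨_, ha, n, rfl⟩ := mem_closure_iff_nhds.mp hz t ht
    exact ⟨n, ha⟩
  refine ⟨Ultrafilter.of (comap f (𝓝 z)), fun ε => ?_⟩
  have h1 : Tendsto f (Ultrafilter.of (comap f (𝓝 z))) (𝓝 z) :=
    tendsto_comap.mono_left (Ultrafilter.of_le _)
  exact tendsto_nhds_unique (tendsto_proj T _ ε x) (tendsto_pi_nhds.mp h1 ε)

/-! ### Invariance of the cube sets -/

section Q

variable {T}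

lemma Qcube_act {d : ℕ} {z : (Fin d → Bool) → X} (hz : z ∈ Qcube T d)
    (q : Ultrafilter (Fin d → ℤ)) :
    (fun ε => act T (proj ε q) (z ε)) ∈ Qcube T d := by
  have h : Tendsto (fun (n : Fin d → ℤ) (ε : Fin d → Bool) => (T.toEquiv ^ dot ε n) (z ε)) q
      (𝓝 (fun ε => act T (proj ε q) (z ε))) :=
    tendsto_pi_nhds.mpr fun ε => tendsto_proj T q ε (z ε)
  exact isClosed_closure.mem_of_tendsto h (Eventually.of_forall fun n => Qcube_zpow hz n)

lemma Qcube_diag {d : ℕ} {z : (Fin d → Bool) → X} (hz : z ∈ Qcube T d) (p : Ultrafilter ℤ) :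
    (fun ε => act T p (z ε)) ∈ Qcube T d := by
  have h : Tendsto (fun (n : ℤ) (ε : Fin d → Bool) => (T.toEquiv ^ n) (z ε)) p
      (𝓝 (fun ε => act T p (z ε))) :=
    tendsto_pi_nhds.mpr fun ε => tendsto_act T p (z ε)
  refine isClosed_closure.mem_of_tendsto h (Eventually.of_forall fun k => ?_)
  refine map_mem_closure
    (f := fun (z : (Fin d → Bool) → X) ε => (T.toEquiv ^ k) (z ε)) ?_ hz ?_
  · exact continuous_pi fun ε => (continuous_zpow T _).comp (continuous_apply ε)
  · rintro _ ⟨x, n, rfl⟩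
    refine ⟨(T.toEquiv ^ k) x, n, funext fun ε => ?_⟩
    change (T.toEquiv ^ k) ((T.toEquiv ^ dot ε n) x) = (T.toEquiv ^ dot ε n) ((T.toEquiv ^ k) x)
    rw [← zpow_add_apply, ← zpow_add_apply, add_comm]

end Q

/-! ### Generic base points and minimality -/

/-- By lower semicontinuity of `x ↦ closure (F x^[d])` and the Baire category theorem, there is a
point over which every element of `Q^[d]` lies in the face orbit closure of the diagonal point. -/
lemma exists_generic [Nonempty X] (d : ℕ) : ∃ x₀ : X, ∀ z ∈ Qcube T d, z (fun _ => false) = x₀ →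
    z ∈ closure (Set.range fun (n : Fin d → ℤ) (ε : Fin d → Bool) =>
      (T.toEquiv ^ dot ε n) x₀) := by
  obtain ⟨B, hBc, -, hB⟩ := TopologicalSpace.exists_countable_basis ((Fin d → Bool) → X)
  let F : X → (Fin d → ℤ) → (Fin d → Bool) → X := fun x n ε => (T.toEquiv ^ dot ε n) x
  have hF : ∀ n, Continuous (fun x => F x n) := fun n =>
    continuous_pi fun ε => continuous_zpow T _
  let O : Set ((Fin d → Bool) → X) → Set X := fun V => {x | ∃ n, F x n ∈ V}
  have hO : ∀ V, IsOpen V → IsOpen (O V) := by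
    intro V hV
    have : O V = ⋃ n, (fun x => F x n) ⁻¹' V := by ext; simp [O]
    rw [this]
    exact isOpen_iUnion fun n => hV.preimage (hF n)
  have hd : Dense (⋂ V ∈ B, (frontier (O V))ᶜ) := by
    refine dense_biInter_of_isOpen (fun V _ => isClosed_frontier.isOpen_compl)
      hBc (fun V hV => ?_)
    rw [← interior_eq_empty_iff_dense_compl]
    rw [← frontier_compl]
    exact interior_frontier (hO V (hB.isOpen hV)).isClosed_compl
  obtain ⟨x₀, hx₀⟩ := hd.nonempty
  refine ⟨x₀, fun z hz hzx => ?_⟩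
  rw [hB.mem_closure_iff]
  intro V hVB hzV
  have hVo := hB.isOpen hVB
  have hcl : x₀ ∈ closure (O V) := by
    rw [mem_closure_iff]
    intro U hU hxU
    have hopen : IsOpen (V ∩ (fun z : (Fin d → Bool) → X => z (fun _ => false)) ⁻¹' U) :=
      hVo.inter (hU.preimage (continuous_apply (A := fun _ : Fin d → Bool => X) fun _ => false))
    obtain ⟨_, ⟨hV', hU'⟩, x, n, rfl⟩ := mem_closure_iff.mp hz _ hopen ⟨hzV, by
      change z (fun _ => false) ∈ U
      rwa [hzx]⟩
    refine ⟨x, ?_, n, hV'⟩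
    simpa using hU'
  have hnf : x₀ ∉ frontier (O V) := Set.mem_iInter₂.mp hx₀ V hVB
  rw [(hO V hVo).frontier_eq] at hnf
  obtain ⟨n, hn⟩ : x₀ ∈ O V := by
    by_contra h
    exact hnf ⟨hcl, h⟩
  exact ⟨_, hn, n, rfl⟩

/-- In a minimal system, `βℤ` acts transitively. -/
lemma exists_act_eq (hT : ∀ x : X, Dense {y : X | ∃ n : ℤ, y = (T.toEquiv ^ n) x}) (x y : X) :
    ∃ s : Ultrafilter ℤ, act T s x = y := by
  have hcl : IsClosed (Set.range fun s => act T s x) :=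
    (isCompact_range (continuous_act T x)).isClosed
  have hsub : {y : X | ∃ n : ℤ, y = (T.toEquiv ^ n) x} ⊆ Set.range fun s => act T s x := by
    rintro _ ⟨n, rfl⟩
    exact ⟨pure n, act_pure T n x⟩
  exact hcl.closure_subset_iff.mpr hsub (hT x y)

/-- Given two points `x`, `x₀` of a minimal system, a minimal left ideal of `βℤ` contains
idempotents `u` and `v` and an element `p` such that `u` fixes `x`, `p` moves `x` to `x₀`, and `v`
fixes `p` (hence `x₀`); a single `r` brings both `p` and `u + p` back to `u`. -/
lemma exists_ideal_elements (hT : ∀ x : X, Dense {y : X | ∃ n : ℤ, y = (T.toEquiv ^ n) x})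
    (x x₀ : X) :
    ∃ u v p r : Ultrafilter ℤ, u + u = u ∧ IsMin u ∧ v + v = v ∧ IsMin v ∧ v + u = v ∧
      act T u x = x ∧ act T p x = x₀ ∧ v + p = p ∧ r + p = u ∧ r + (u + p) = u := by
  obtain ⟨s₀, ha, -⟩ := exists_isMin_idempotent (S := Ultrafilter ℤ) add_continuous_left (pure 0)
  set a := s₀ + pure 0
  obtain ⟨u, ⟨⟨s, rfl⟩, hux⟩, huu⟩ := exists_idempotent_in_compact_add_subsemigroup
    (M := Ultrafilter ℤ) add_continuous_left
    (Set.range (fun s => s + a) ∩ {p | act T p x = x})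
    (by
      obtain ⟨s, hs⟩ := exists_act_eq T hT (act T a x) x
      exact ⟨s + a, ⟨s, rfl⟩, by rw [Set.mem_ofPred_eq, act_add, hs]⟩)
    ((isCompact_range (add_continuous_left a)).inter_right
      (isClosed_singleton.preimage (continuous_act T x)))
    (by
      rintro p ⟨-, hp⟩ _ ⟨⟨t, rfl⟩, hq⟩
      refine ⟨⟨p + t, add_assoc _ _ _⟩, ?_⟩
      rw [Set.mem_ofPred_eq] at hp hq ⊢
      rw [act_add, hq, hp])
  have hu : IsMin (s + a) := ha.add_left s
  simp only at huu hux
  set u := s + a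
  rw [Set.mem_ofPred_eq] at hux
  obtain ⟨k, hk⟩ := exists_act_eq T hT x x₀
  obtain ⟨t, ht⟩ := hu (u + k)
  set p := k + u with hp
  have htp : t + (u + p) = u := by rw [hp, ← add_assoc u, ht]
  obtain ⟨v, ⟨⟨w, rfl⟩, hvp⟩, hvv⟩ := exists_idempotent_in_compact_add_subsemigroup
    (M := Ultrafilter ℤ) add_continuous_left
    (Set.range (fun s => s + u) ∩ {q | q + p = p})
    (by
      refine ⟨k + t + u, ⟨k + t, rfl⟩, ?_⟩
      rw [Set.mem_ofPred_eq, add_assoc, add_assoc, htp])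
    ((isCompact_range (add_continuous_left u)).inter_right
      (isClosed_singleton.preimage (add_continuous_left p)))
    (by
      rintro q ⟨-, hq⟩ _ ⟨⟨t, rfl⟩, hq'⟩
      refine ⟨⟨q + t, add_assoc _ _ _⟩, ?_⟩
      rw [Set.mem_ofPred_eq] at hq hq' ⊢
      rw [add_assoc, hq', hq])
  refine ⟨u, w + u, p, t + u, huu, hu, hvv, hu.add_left w, ?_, hux, ?_, hvp, ?_, ?_⟩
  · rw [add_assoc, huu]
  · rw [hp, act_add, hux, hk]
  · rw [add_assoc, htp]
  · rw [add_assoc, ← add_assoc u u p, huu, htp]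

/-! ### Collapsing cubes to the diagonal -/

/-- The uniqueness of the minimal face orbit closure: over every point `x` of a minimal system,
the face orbit closure of each element of `Q^[d]` with origin `x` contains the diagonal
point `x^[d]`. -/
theorem exists_to_diag (hT : ∀ x : X, Dense {y : X | ∃ n : ℤ, y = (T.toEquiv ^ n) x}) (d : ℕ) :
    ∀ z ∈ Qcube T d, ∃ q : Ultrafilter (Fin d → ℤ), ∀ ε,
      act T (proj ε q) (z ε) = z (fun _ => false) := by
  induction d with
  | zero =>
    intro z _
    refine ⟨pure 0, fun ε => ?_⟩
    obtain rfl : ε = fun _ => false := Subsingleton.elim _ _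
    rw [proj_false, act_pure_zero]
  | succ d ih =>
    intro z hz
    rw [← cons_false_false]
    -- The induction hypothesis makes the facet `ε 0 = false` constant, equal to `x`.
    obtain ⟨q₁, hq₁⟩ := ih _ (Qcube_facet hz false)
    set x : X := z (Fin.cons false fun _ => false)
    let z₁ : (Fin (d + 1) → Bool) → X := fun ε => act T (proj ε (inflate q₁)) (z ε)
    have hz₁ : z₁ ∈ Qcube T (d + 1) := Qcube_act hz _
    have hz₁x : ∀ ε : Fin d → Bool, z₁ (Fin.cons false ε) = x := by
      intro ε
      change act T (proj (Fin.cons false ε : Fin (d + 1) → Bool) (inflate q₁)) _ = x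
      rw [proj_inflate]
      exact hq₁ ε
    suffices h : ∃ q : Ultrafilter (Fin (d + 1) → ℤ), ∀ ε, act T (proj ε q) (z₁ ε) = x by
      obtain ⟨q, hq⟩ := h
      refine ⟨q + inflate q₁, fun ε => ?_⟩
      rw [proj_add, act_add]
      exact hq ε
    have : Nonempty X := ⟨x⟩
    obtain ⟨x₀, hx₀⟩ := exists_generic T (d + 1)
    obtain ⟨u, v, p, r, huu, hu, hvv, hv, hvu, hux, hpx, hvp, hrp, hrup⟩ :=
      exists_ideal_elements T hT x x₀
    have hvx₀ : act T v x₀ = x₀ := by rw [← hpx, ← act_add, hvp]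
    -- Translating diagonally by `p` moves the origin to the generic point `x₀`.
    let z₀ : (Fin (d + 1) → Bool) → X := fun ε => act T p (z₁ ε)
    have hz₀x : ∀ ε : Fin d → Bool, z₀ (Fin.cons false ε) = x₀ := by
      intro ε
      change act T p (z₁ (Fin.cons false ε)) = x₀
      rw [hz₁x, hpx]
    have hz₀o : z₀ (fun _ => false) = x₀ := by
      rw [← cons_false_false]; exact hz₀x _
    have hvz₀ : ∀ ε, act T v (z₀ ε) = z₀ ε := by
      intro ε
      change act T v (act T p (z₁ ε)) = act T p (z₁ ε)
      rw [← act_add, hvp]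
    obtain ⟨g, hg⟩ := exists_of_mem_closure T (hx₀ z₀ (Qcube_diag hz₁ p) hz₀o)
    obtain ⟨g', hg'⟩ := exists_return hvv hv (d + 1) g
    obtain ⟨vs, hvs⟩ := exists_star hvv (d + 1)
    have hf : ∀ ε, act T (proj ε (g' + vs)) (z₀ ε) = x₀ := by
      intro ε
      by_cases hε : ε = fun _ => false
      · subst hε
        rw [proj_false, act_pure_zero, hz₀o]
      · rw [proj_add, hvs ε hε, act_add, hvz₀, ← hg ε]
        conv_lhs => rw [← hvx₀]
        rw [← act_add, ← act_add, add_assoc, hg' ε hε, hvx₀]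
    set f := g' + vs with hf_def
    -- `f` may have moved the facet `ε 0 = false` away from `x`; applying `q'` in parallel to both
    -- facets restores it, and sends `x₀` to `u x₀` on the opposite facet.
    obtain ⟨q', hq'⟩ := exists_return huu hu d (restrict f)
    refine ⟨facet d r + (inflate q' + (f + facet d p)), fun ε => ?_⟩
    obtain ⟨b, ε', rfl⟩ : ∃ b ε', ε = (Fin.cons b ε' : Fin (d + 1) → Bool) :=
      ⟨_, _, (Fin.cons_self_tail ε).symm⟩
    rw [proj_add, proj_add, proj_add, proj_inflate, act_add, act_add, act_add]
    cases b with
    | false =>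
      rw [proj_facet_false, proj_facet_false, act_pure_zero, act_pure_zero, hz₁x,
        ← proj_restrict]
      by_cases hε : ε' = fun _ => false
      · subst hε
        rw [proj_false, proj_false, act_pure_zero, act_pure_zero]
      · conv_lhs => rw [← hux]
        rw [← act_add, ← act_add, add_assoc, hq' ε' hε, hux]
    | true =>
      rw [proj_facet_true, proj_facet_true]
      have h1 : act T (proj (Fin.cons true ε' : Fin (d + 1) → Bool) f)
          (act T p (z₁ (Fin.cons true ε'))) = x₀ := hf _
      rw [h1]
      by_cases hε : ε' = fun _ => false
      · subst hε
        rw [proj_false, act_pure_zero, ← hpx, ← act_add, hrp, hux]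
      · have h2 : act T (proj ε' (restrict f)) x₀ = x₀ := by
          have := hf (Fin.cons false ε')
          rwa [hz₀x, ← proj_restrict] at this
        have h3 : proj ε' (restrict f) + u = proj ε' (restrict f) := by
          rw [proj_restrict, hf_def, proj_add, hvs _ (cons_false_ne hε), add_assoc, hvu]
        have h4 := hq' ε' hε
        rw [h3] at h4
        conv_lhs => rw [← h2]
        rw [← act_add _ (proj ε' q'), h4, ← hpx, ← act_add, ← act_add, add_assoc, hrup, hux]

/-! ### Cubes from regionally proximal pairs -/

/-- A regionally proximal pair is completed to a cube `(x, a, y, a)` of one dimension more, with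
the new coordinate separating `x` from `y`. -/
lemma exists_cube_of_RP (hT : ∀ x : X, Dense {y : X | ∃ n : ℤ, y = (T.toEquiv ^ n) x}) {d : ℕ}
    {x y : X} (hxy : (x, y) ∈ RP T d) :
    ∃ c ∈ Qcube T (d + 1), c (Fin.cons false fun _ => false) = x ∧
      c (Fin.cons true fun _ => false) = y ∧
      ∀ ε : Fin d → Bool, ε ≠ (fun _ => false) → c (Fin.cons false ε) = c (Fin.cons true ε) := by
  have hδ : ∀ k : ℕ, (0 : ℝ) < 1 / ((k : ℝ) + 1) := fun k => by positivity
  choose x' y' n hx' hy' hn using fun k => hxy _ (hδ k)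
  have hlim : Tendsto (fun k : ℕ => 1 / ((k : ℝ) + 1)) (hyperfilter ℕ : Filter ℕ) (𝓝 0) :=
    tendsto_one_div_add_atTop_nhds_zero_nat.mono_left
      (by rw [← Nat.cofinite_eq_atTop]; exact hyperfilter_le_cofinite)
  let C : ℕ → (Fin (d + 1) → Bool) → X := fun k ε =>
    (T.toEquiv ^ dot (Fin.tail ε) (n k)) (if ε 0 then y' k else x' k)
  have hC : ∀ k, C k ∈ Qcube T (d + 1) := by
    intro k
    -- `y' k` is a limit of translates `T^m (x' k)`; take `m` as the exponent in the new direction.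
    refine map_mem_closure (s := {w : X | ∃ m : ℤ, w = (T.toEquiv ^ m) (x' k)})
      (f := fun (w : X) (ε : Fin (d + 1) → Bool) =>
        (T.toEquiv ^ dot (Fin.tail ε) (n k)) (if ε 0 then w else x' k)) ?_ (hT (x' k) (y' k)) ?_
    · refine continuous_pi fun ε => (continuous_zpow T _).comp ?_
      split_ifs
      · exact continuous_id
      · exact continuous_const
    · rintro _ ⟨m, rfl⟩
      refine ⟨x' k, Fin.cons m (n k), funext fun ε => ?_⟩
      obtain ⟨b, ε', rfl⟩ : ∃ b ε', ε = (Fin.cons b ε' : Fin (d + 1) → Bool) :=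
        ⟨_, _, (Fin.cons_self_tail ε).symm⟩
      change _ = (T.toEquiv ^ dot (Fin.cons b ε' : Fin (d + 1) → Bool)
        (Fin.cons m (n k) : Fin (d + 1) → ℤ)) (x' k)
      rw [dot_cons, add_comm (if b then m else 0), zpow_add_apply]
      cases b <;> simp
  obtain ⟨c, -, hc⟩ := isCompact_univ.ultrafilter_le_nhds ((hyperfilter ℕ).map C) (by simp)
  have hc' : Tendsto C (hyperfilter ℕ : Filter ℕ) (𝓝 c) := hc
  have hpt := tendsto_pi_nhds.mp hc'
  refine ⟨c, isClosed_closure.mem_of_tendsto hc' (Eventually.of_forall hC), ?_, ?_, ?_⟩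
  · refine tendsto_nhds_unique (hpt _) ?_
    refine tendsto_iff_dist_tendsto_zero.mpr
      (squeeze_zero (fun _ => dist_nonneg) (fun k => ?_) hlim)
    have : C k (Fin.cons false fun _ => false) = x' k := by simp [C, dot_false]
    rw [this, dist_comm]
    exact (hx' k).le
  · refine tendsto_nhds_unique (hpt _) ?_
    refine tendsto_iff_dist_tendsto_zero.mpr
      (squeeze_zero (fun _ => dist_nonneg) (fun k => ?_) hlim)
    have : C k (Fin.cons true fun _ => false) = y' k := by simp [C, dot_false]
    rw [this, dist_comm]
    exact (hy' k).le
  · intro ε hε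
    refine eq_of_dist_eq_zero (tendsto_nhds_unique
      ((hpt (Fin.cons false ε)).dist (hpt (Fin.cons true ε))) ?_)
    refine squeeze_zero (fun _ => dist_nonneg) (fun k => ?_) hlim
    have := (hn k ε hε).le
    simpa [C, dot] using this

end Action

end CornerQ

theorem RP_implies_corner_in_Q {X : Type*} [MetricSpace X] [CompactSpace X]
    (T : X ≃ₜ X)
    (hmin : ∀ x : X, Dense {y : X | ∃ n : ℤ, y = (T.toEquiv ^ n) x})
    (d : ℕ) (hd : 1 ≤ d) (x y : X) (hxy : (x, y) ∈ RP T d) :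
    (fun ε : Fin (d + 1) → Bool =>
      if ε = (fun _ => false) then x else y) ∈ Qcube T (d + 1) := by
  obtain ⟨c, hc, hcx, hcy, hcc⟩ := CornerQ.exists_cube_of_RP T hmin hxy
  obtain ⟨q, hq⟩ := CornerQ.exists_to_diag T hmin d _ (CornerQ.Qcube_facet hc true)
  convert CornerQ.Qcube_act hc (CornerQ.inflate q) using 1
  funext ε
  obtain ⟨b, ε', rfl⟩ : ∃ b ε', ε = (Fin.cons b ε' : Fin (d + 1) → Bool) :=
    ⟨_, _, (Fin.cons_self_tail ε).symm⟩
  rw [CornerQ.proj_inflate]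
  cases b with
  | true => rw [if_neg (CornerQ.cons_true_ne ε'), hq ε', hcy]
  | false =>
    by_cases h : ε' = fun _ => false
    · subst h
      rw [if_pos CornerQ.cons_false_false, CornerQ.proj_false, CornerQ.act_pure_zero, hcx]
    · rw [if_neg (CornerQ.cons_false_ne h), hcc ε' h, hq ε', hcy]
end

section
/- Let (X,T) be a minimal dynamical system and d ≥ 1. Then (x,y) ∈ RP^[d](X) if and only if the point (x, x, ..., x, y) ∈ X^{2^{d+1}} (y in the last coordinate, indexed by ε = (1,...,1), x in all other coordinates) belongs to Q^[d+1](X). -/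
open Topology Filter

/-! ### Compact right topological semigroups -/

section Semigroup

variable {S : Type*} [Semigroup S] [TopologicalSpace S]

theorem closure_mul_mem (hc : ∀ r : S, Continuous (· * r)) {H : Set S}
    (hH : ∀ a ∈ H, ∀ b ∈ H, a * b ∈ H) (hl : ∀ a ∈ H, Continuous (a * ·)) :
    ∀ a ∈ closure H, ∀ b ∈ closure H, a * b ∈ closure H := by
  intro a ha b hb
  have h1 : ∀ a ∈ H, a * b ∈ closure H := fun a ha =>
    map_mem_closure (hl a ha) hb (fun b hb => hH a ha b hb)
  have h2 := map_mem_closure (hc b) ha (t := closure H) h1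
  rwa [closure_closure] at h2

/-- A compact right topological semigroup has a minimal left ideal `M`; the minimality is recorded
as the solvability of `s * p = q` inside `M`. -/
theorem exists_minimal_left_ideal [T2Space S] (hc : ∀ r : S, Continuous (· * r)) {E : Set S}
    (hE : IsCompact E) (hne : E.Nonempty) (hmul : ∀ a ∈ E, ∀ b ∈ E, a * b ∈ E) :
    ∃ M ⊆ E, IsCompact M ∧ M.Nonempty ∧ (∀ a ∈ E, ∀ m ∈ M, a * m ∈ M) ∧
      ∀ p ∈ M, ∀ q ∈ M, ∃ s ∈ M, s * p = q := by
  let F : Set (Set S) := {N | N ⊆ E ∧ IsCompact N ∧ N.Nonempty ∧ ∀ a ∈ E, ∀ m ∈ N, a * m ∈ N}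
  obtain ⟨M, -, hM⟩ : ∃ M, M ⊆ E ∧ Minimal (· ∈ F) M := by
    refine zorn_superset_nonempty F ?_ E ⟨subset_rfl, hE, hne, hmul⟩
    intro c hcF hchain hcne
    have : Nonempty c := hcne.to_subtype
    obtain ⟨t₀, ht₀⟩ := hcne
    refine ⟨⋂₀ c, ⟨?_, ?_, ?_, ?_⟩, fun s hs => Set.sInter_subset_of_mem hs⟩
    · exact (Set.sInter_subset_of_mem ht₀).trans (hcF ht₀).1
    · exact (hcF ht₀).2.1.of_isClosed_subset
        (isClosed_sInter fun t ht => (hcF ht).2.1.isClosed) (Set.sInter_subset_of_mem ht₀)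
    · exact IsCompact.nonempty_sInter_of_directed_nonempty_isCompact_isClosed
        (IsChain.directedOn hchain.symm) (fun U hU => (hcF hU).2.2.1)
        (fun U hU => (hcF hU).2.1) (fun U hU => (hcF hU).2.1.isClosed)
    · exact fun a ha m hm => Set.mem_sInter.2 fun t ht => (hcF ht).2.2.2 a ha m (hm t ht)
  obtain ⟨hME, hMc, hMne, hMl⟩ := hM.prop
  refine ⟨M, hME, hMc, hMne, hMl, fun p hp q hq => ?_⟩
  have himg : (· * p) '' M = M := by
    apply hM.eq_of_subset
    · refine ⟨?_, hMc.image (hc p), hMne.image _, ?_⟩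
      · rintro _ ⟨m, hm, rfl⟩
        exact hmul _ (hME hm) _ (hME hp)
      · rintro a ha _ ⟨m, hm, rfl⟩
        exact ⟨a * m, hMl a ha m hm, mul_assoc _ _ _⟩
    · rintro _ ⟨m, hm, rfl⟩
      exact hMl _ (hME hm) _ hp
  rw [← himg] at hq
  exact hq

end Semigroup

/-! ### The Ellis semigroup -/

section Ellis

variable {X : Type*} [TopologicalSpace X]

/-- Self-maps of `X` carry the topology of pointwise convergence. -/
instance endTopology : TopologicalSpace (Function.End X) :=
  inferInstanceAs (TopologicalSpace (X → X))

instance endT2 [T2Space X] : T2Space (Function.End X) :=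
  inferInstanceAs (T2Space (X → X))

instance endCompact [CompactSpace X] : CompactSpace (Function.End X) :=
  inferInstanceAs (CompactSpace (X → X))

theorem continuous_end_eval (x : X) : Continuous (fun p : Function.End X => p x) :=
  continuous_apply (A := fun _ : X => X) x

theorem continuous_to_end {Y : Type*} [TopologicalSpace Y] {f : Y → Function.End X}
    (h : ∀ x, Continuous (fun y => f y x)) : Continuous f :=
  continuous_pi (A := fun _ : X => X) h

theorem end_mul_right (r : Function.End X) : Continuous (· * r) :=
  continuous_to_end fun x => continuous_end_eval (r x)

theorem end_mul_left {a : Function.End X} (ha : Continuous (a : X → X)) :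
    Continuous (a * ·) :=
  continuous_to_end fun x => ha.comp (continuous_end_eval x)

/-- The power `T ^ k`, as an element of the semigroup of self-maps of `X`. -/
def tpow (T : X ≃ₜ X) (k : ℤ) : Function.End X := fun x => (T.toEquiv ^ k) x

theorem tpow_add (T : X ≃ₜ X) (a b : ℤ) : tpow T (a + b) = tpow T a * tpow T b := by
  funext x
  change (T.toEquiv ^ (a + b)) x = (T.toEquiv ^ a) ((T.toEquiv ^ b) x)
  rw [zpow_add]; rfl

theorem tpow_add_apply (T : X ≃ₜ X) (a b : ℤ) (x : X) :
    tpow T (a + b) x = tpow T a (tpow T b x) := by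
  rw [tpow_add]; rfl

theorem tpow_zero (T : X ≃ₜ X) (x : X) : tpow T 0 x = x := by
  change (T.toEquiv ^ (0 : ℤ)) x = x
  rw [zpow_zero]; rfl

theorem tpow_continuous (T : X ≃ₜ X) (k : ℤ) : Continuous (tpow T k : X → X) := by
  have h : ∀ k : ℤ, (T ^ k).toEquiv = T.toEquiv ^ k := fun k =>
    map_zpow (⟨⟨Homeomorph.toEquiv, rfl⟩, fun _ _ => rfl⟩ : (X ≃ₜ X) →* Equiv.Perm X) T k
  have : (tpow T k : X → X) = fun x => (T ^ k : X ≃ₜ X) x := by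
    funext x
    change (T.toEquiv ^ k) x = (T ^ k : X ≃ₜ X) x
    rw [← h]; rfl
  rw [this]
  exact (T ^ k).continuous

/-- The Ellis semigroup of `(X, T)`: the pointwise closure of the powers of `T`. -/
def ellis (T : X ≃ₜ X) : Set (Function.End X) := closure (Set.range (tpow T))

theorem ellis_mul (T : X ≃ₜ X) : ∀ a ∈ ellis T, ∀ b ∈ ellis T, a * b ∈ ellis T := by
  apply closure_mul_mem end_mul_right
  · rintro _ ⟨a, rfl⟩ _ ⟨b, rfl⟩
    exact ⟨a + b, tpow_add T a b⟩
  · rintro _ ⟨a, rfl⟩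
    exact end_mul_left (tpow_continuous T a)

/-- In a minimal system every point is fixed by an idempotent of any given minimal left ideal. -/
theorem exists_idempotent_fixing [CompactSpace X] [T2Space X] (T : X ≃ₜ X)
    (hmin : ∀ x : X, Dense {y : X | ∃ n : ℤ, y = (T.toEquiv ^ n) x})
    {M : Set (Function.End X)} (hME : M ⊆ ellis T) (hMc : IsCompact M) (hMne : M.Nonempty)
    (hMl : ∀ a ∈ ellis T, ∀ m ∈ M, a * m ∈ M) (x : X) :
    ∃ v ∈ M, v * v = v ∧ v x = x := by
  have hev : x ∈ (fun p : Function.End X => p x) '' M := by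
    have hcl : IsClosed ((fun p : Function.End X => p x) '' M) :=
      (hMc.image (continuous_end_eval x)).isClosed
    obtain ⟨m, hm⟩ := hMne
    refine hcl.closure_subset_iff.2 ?_ (hmin (m x) x)
    rintro _ ⟨n, rfl⟩
    exact ⟨tpow T n * m, hMl _ (subset_closure ⟨n, rfl⟩) _ hm, rfl⟩
  obtain ⟨m, hm, hmx⟩ := hev
  obtain ⟨v, hv, hvv⟩ := exists_idempotent_in_compact_subsemigroup end_mul_right
    (M ∩ (fun p : Function.End X => p x) ⁻¹' {x}) ⟨m, hm, hmx⟩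
    (hMc.inter_right (isClosed_singleton.preimage (continuous_end_eval x)))
    (by
      rintro a ⟨ha, hax⟩ b ⟨hb, hbx⟩
      refine ⟨hMl a (hME ha) b hb, ?_⟩
      have hax' : a x = x := hax
      have hbx' : b x = x := hbx
      change a (b x) = x
      rw [hbx', hax'])
  exact ⟨v, hv.1, hvv, hv.2⟩

end Ellis

/-! ### Group actions on cubes and their enveloping semigroups -/

section Cube

variable {X : Type*} [TopologicalSpace X]

/-- The pairing `n · ε` of an integer vector with a vertex of the cube. -/
def dotε {d : ℕ} (n : Fin d → ℤ) (ε : Fin d → Bool) : ℤ := ∑ i, if ε i then n i else 0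

theorem dotε_add {d : ℕ} (n m : Fin d → ℤ) (ε : Fin d → Bool) :
    dotε (n + m) ε = dotε n ε + dotε m ε := by
  unfold dotε
  rw [← Finset.sum_add_distrib]
  refine Finset.sum_congr rfl fun i _ => ?_
  split_ifs <;> simp

theorem dotε_zero {d : ℕ} (ε : Fin d → Bool) : dotε (0 : Fin d → ℤ) ε = 0 := by
  simp [dotε]

theorem dotε_single {d : ℕ} (j : Fin d) (k : ℤ) (ε : Fin d → Bool) :
    dotε (Pi.single j k) ε = if ε j then k else 0 := by
  unfold dotε
  rw [Finset.sum_eq_single j]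
  · simp
  · intro b _ hb
    simp [Pi.single_eq_of_ne hb]
  · simp

theorem dotε_cons {d : ℕ} (k : ℤ) (n : Fin d → ℤ) (ε : Fin (d + 1) → Bool) :
    dotε (Fin.cons k n : Fin (d + 1) → ℤ) ε
      = (if ε 0 then k else 0) + dotε n (fun i => ε i.succ) := by
  unfold dotε
  rw [Fin.sum_univ_succ]
  simp

theorem dotε_not {d : ℕ} (n : Fin d → ℤ) (ε : Fin d → Bool) :
    dotε n (fun i => !(ε i)) = dotε (-n) ε + ∑ i, n i := by
  unfold dotε
  rw [← Finset.sum_add_distrib]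
  refine Finset.sum_congr rfl fun i _ => ?_
  cases h : ε i <;> simp [h]

theorem mem_Qcube_of_cube (T : X ≃ₜ X) {d : ℕ} (x : X) (n : Fin d → ℤ) :
    (fun ε => tpow T (dotε n ε) x) ∈ Qcube T d :=
  subset_closure ⟨x, n, rfl⟩

/-- A continuous map of configuration spaces sends `Q^[d]` into a closed set as soon as it does so
for the cubes `(T^{n·ε} x)_ε`. -/
theorem Qcube_induction (T : X ≃ₜ X) {d : ℕ} {Y : Type*} [TopologicalSpace Y]
    {f : ((Fin d → Bool) → X) → Y} (hf : Continuous f) {C : Set Y} (hC : IsClosed C)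
    (h : ∀ x n, f (fun ε => tpow T (dotε n ε) x) ∈ C) {z : (Fin d → Bool) → X}
    (hz : z ∈ Qcube T d) : f z ∈ C := by
  refine (hC.preimage hf).closure_subset_iff.2 ?_ hz
  rintro _ ⟨x, n, rfl⟩
  exact h x n

theorem Qcube_closed (T : X ≃ₜ X) (d : ℕ) : IsClosed (Qcube T d) := isClosed_closure

/-- Invariance of `Q^[d]` under the group generated by the diagonal and the face
transformations. -/
theorem Qcube_shift (T : X ≃ₜ X) {d : ℕ} (c : ℤ) (m : Fin d → ℤ) {z : (Fin d → Bool) → X}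
    (hz : z ∈ Qcube T d) : (fun ε => tpow T (c + dotε m ε) (z ε)) ∈ Qcube T d := by
  refine Qcube_induction T (f := fun z ε => tpow T (c + dotε m ε) (z ε)) ?_ (Qcube_closed T d)
    ?_ hz
  · exact continuous_pi fun ε => (tpow_continuous T _).comp (continuous_apply ε)
  · intro x n
    have h := mem_Qcube_of_cube T (tpow T c x) (m + n)
    refine (congrArg (· ∈ Qcube T d) (funext fun ε => ?_)).mp h
    rw [dotε_add, ← tpow_add_apply, ← tpow_add_apply]
    congr 1
    ring

/-- The enveloping semigroup of the group generated by the diagonal and the face transformations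
of the `d`-cube, realised as coordinatewise self-maps. -/
def cubeEllis (T : X ≃ₜ X) (d : ℕ) : Set ((Fin d → Bool) → Function.End X) :=
  closure (Set.range fun p : ℤ × (Fin d → ℤ) => fun ε => tpow T (p.1 + dotε p.2 ε))

theorem pi_end_mul_right {I : Type*} (r : I → Function.End X) : Continuous (· * r) :=
  continuous_pi fun i => (end_mul_right (r i)).comp (continuous_apply i)

theorem cubeEllis_mul (T : X ≃ₜ X) (d : ℕ) :
    ∀ a ∈ cubeEllis T d, ∀ b ∈ cubeEllis T d, a * b ∈ cubeEllis T d := by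
  apply closure_mul_mem pi_end_mul_right
  · rintro _ ⟨⟨c, n⟩, rfl⟩ _ ⟨⟨c', n'⟩, rfl⟩
    refine ⟨(c + c', n + n'), funext fun ε => ?_⟩
    simp only [Pi.mul_apply]
    rw [← tpow_add, dotε_add]
    congr 1
    ring
  · rintro _ ⟨⟨c, n⟩, rfl⟩
    exact continuous_pi fun ε =>
      (end_mul_left (tpow_continuous T _)).comp (continuous_apply ε)

theorem cubeEllis_apply (T : X ≃ₜ X) {d : ℕ} {a : (Fin d → Bool) → Function.End X}
    (ha : a ∈ cubeEllis T d) (ε : Fin d → Bool) : a ε ∈ ellis T := by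
  refine map_mem_closure (f := fun a : (Fin d → Bool) → Function.End X => a ε)
    (continuous_apply ε) ha ?_
  rintro _ ⟨p, rfl⟩
  exact ⟨_, rfl⟩

theorem diag_mem_cubeEllis (T : X ≃ₜ X) (d : ℕ) {v : Function.End X} (hv : v ∈ ellis T) :
    (fun _ => v) ∈ cubeEllis T d := by
  refine map_mem_closure (f := fun v : Function.End X => fun _ : Fin d → Bool => v)
    (continuous_pi fun _ => continuous_id) hv ?_
  rintro _ ⟨k, rfl⟩
  exact ⟨(k, 0), by funext ε; simp [dotε_zero]⟩

/-- Pushing `Q^[d]` by a continuously parametrised family of coordinatewise self-maps: if the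
family preserves `Q^[d]` over a set `H` of parameters, it does so over `closure H`. -/
theorem Qcube_closure_action (T : X ≃ₜ X) {d : ℕ} {P : Type*} [TopologicalSpace P] {H : Set P}
    {f : P → (Fin d → Bool) → X} (hf : Continuous f)
    (h : ∀ p ∈ H, f p ∈ Qcube T d) {p : P} (hp : p ∈ closure H) : f p ∈ Qcube T d :=
  ((Qcube_closed T d).preimage hf).closure_subset_iff.2 h hp

theorem Qcube_diag (T : X ≃ₜ X) {d : ℕ} {v : Function.End X} (hv : v ∈ ellis T)
    {z : (Fin d → Bool) → X} (hz : z ∈ Qcube T d) : (fun ε => v (z ε)) ∈ Qcube T d := by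
  refine Qcube_closure_action T (f := fun (v : Function.End X) ε => v (z ε))
    (continuous_pi fun ε => continuous_end_eval _) ?_ hv
  rintro _ ⟨k, rfl⟩
  simpa [dotε_zero] using Qcube_shift T k 0 hz

theorem Qcube_double (T : X ≃ₜ X) {d : ℕ} {p : (Fin d → Bool) → Function.End X}
    (hp : p ∈ cubeEllis T d) {z : (Fin (d + 1) → Bool) → X} (hz : z ∈ Qcube T (d + 1)) :
    (fun ε => p (fun i => ε i.succ) (z ε)) ∈ Qcube T (d + 1) := by
  refine Qcube_closure_action T
    (f := fun (p : (Fin d → Bool) → Function.End X) (ε : Fin (d + 1) → Bool) =>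
      p (fun i => ε i.succ) (z ε))
    (continuous_pi fun ε => (continuous_end_eval _).comp (continuous_apply _)) ?_ hp
  rintro _ ⟨⟨c, n⟩, rfl⟩
  have h := Qcube_shift T c (Fin.cons 0 n : Fin (d + 1) → ℤ) hz
  simpa [dotε_cons] using h

theorem Qcube_face (T : X ≃ₜ X) {d : ℕ} {v : Function.End X} (hv : v ∈ ellis T) (j : Fin d)
    {z : (Fin d → Bool) → X} (hz : z ∈ Qcube T d) :
    (fun ε => if ε j then v (z ε) else z ε) ∈ Qcube T d := by
  refine Qcube_closure_action T
    (f := fun (v : Function.End X) ε => if ε j then v (z ε) else z ε) ?_ ?_ hv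
  · refine continuous_pi fun ε => ?_
    by_cases h : ε j
    · simpa [h] using continuous_end_eval (z ε)
    · simpa [h] using continuous_const
  · rintro _ ⟨k, rfl⟩
    have h := Qcube_shift T 0 (Pi.single j k) hz
    refine (congrArg (· ∈ Qcube T d) (funext fun ε => ?_)).mp h
    rw [dotε_single]
    split_ifs <;> simp [tpow_zero]

/-- For an idempotent `v` of the Ellis semigroup, `(id, v, …, v)` preserves `Q^[d]`: it is the
product of the face maps attached to the `d` directions. -/
theorem Qcube_punctured (T : X ≃ₜ X) {d : ℕ} {v : Function.End X} (hv : v ∈ ellis T)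
    (hvv : v * v = v) {z : (Fin d → Bool) → X} (hz : z ∈ Qcube T d) :
    (fun ε => if ∃ j, ε j = true then v (z ε) else z ε) ∈ Qcube T d := by
  have hv2 : ∀ a, v (v a) = v a := fun a => congrFun hvv a
  have key : ∀ J : Finset (Fin d),
      (fun ε : Fin d → Bool => if ∃ j ∈ J, ε j = true then v (z ε) else z ε) ∈ Qcube T d := by
    intro J
    induction J using Finset.induction_on with
    | empty => simpa using hz
    | insert j J _ ih =>
      refine (congrArg (· ∈ Qcube T d) (funext fun ε => ?_)).mp (Qcube_face T hv j ih)
      by_cases h1 : ε j = true <;> by_cases h2 : ∃ i ∈ J, ε i = true <;> simp [h1, h2, hv2]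
  simpa using key Finset.univ

theorem Qcube_reflect (T : X ≃ₜ X) {d : ℕ} {z : (Fin d → Bool) → X} (hz : z ∈ Qcube T d) :
    (fun ε => z (fun i => !(ε i))) ∈ Qcube T d := by
  refine Qcube_induction T (f := fun z (ε : Fin d → Bool) => z (fun i => !(ε i)))
    (continuous_pi fun ε => continuous_apply _) (Qcube_closed T d) ?_ hz
  intro x n
  have h := mem_Qcube_of_cube T (tpow T (∑ i, n i) x) (-n)
  refine (congrArg (· ∈ Qcube T d) (funext fun ε => ?_)).mp h
  rw [← tpow_add_apply, ← dotε_not]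

theorem Qcube_upper_face (T : X ≃ₜ X) {d : ℕ} {z : (Fin (d + 1) → Bool) → X}
    (hz : z ∈ Qcube T (d + 1)) :
    (fun ε : Fin d → Bool => z (Fin.cons true ε : Fin (d + 1) → Bool)) ∈ Qcube T d := by
  refine Qcube_induction T
    (f := fun z (ε : Fin d → Bool) => z (Fin.cons true ε : Fin (d + 1) → Bool))
    (continuous_pi fun ε => continuous_apply _) (Qcube_closed T d) ?_ hz
  intro x n
  have h := mem_Qcube_of_cube T (tpow T (n 0) x) (fun i => n i.succ)
  refine (congrArg (· ∈ Qcube T d) (funext fun ε => ?_)).mp h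
  rw [← tpow_add_apply]
  congr 1
  conv_rhs => rw [← Fin.cons_self_tail n, dotε_cons]
  simp [add_comm, Fin.tail_def]

/-! ### Minimality of `Q^[d]` and collapsing a cube to the diagonal -/

/-- A form of the minimality of `Q^[d]` under the diagonal and face transformations: when the
minimal idempotent `v` fixes `y`, every point of `Q^[d]` is carried to `(y, …, y)` by an element of
the enveloping semigroup. The reason is that `(v, …, v)` is itself a minimal idempotent there. -/
theorem exists_collapse [CompactSpace X] [T2Space X] (T : X ≃ₜ X)
    (hmin : ∀ x : X, Dense {y : X | ∃ n : ℤ, y = (T.toEquiv ^ n) x}) (d : ℕ)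
    {M : Set (Function.End X)} (hME : M ⊆ ellis T)
    (hMl : ∀ a ∈ ellis T, ∀ m ∈ M, a * m ∈ M)
    (hMmin : ∀ p ∈ M, ∀ q ∈ M, ∃ s ∈ M, s * p = q)
    {v : Function.End X} (hv : v ∈ M) (hvv : v * v = v) {y : X} (hvy : v y = y)
    {z : (Fin d → Bool) → X} (hz : z ∈ Qcube T d) :
    ∃ p ∈ cubeEllis T d, ∀ ε, p ε (z ε) = y := by
  have hKc : IsCompact (cubeEllis T d) := isClosed_closure.isCompact
  have hvE : v ∈ ellis T := hME hv
  -- An idempotent of a minimal left ideal is a right identity of that ideal.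
  have hright : ∀ m ∈ M, m * v = m := by
    intro m hm
    obtain ⟨s, -, rfl⟩ := hMmin v hv m hm
    rw [mul_assoc, hvv]
  have hevc : Continuous (fun (q : (Fin d → Bool) → Function.End X) ε => q ε y) :=
    continuous_pi fun ε => (continuous_end_eval y).comp (continuous_apply ε)
  obtain ⟨q, hq, hqz⟩ : z ∈ (fun (q : (Fin d → Bool) → Function.End X) ε => q ε y) ''
      cubeEllis T d := by
    have hcl := (hKc.image hevc).isClosed
    refine Qcube_induction T continuous_id hcl ?_ hz
    intro x n
    have hcont : Continuous (fun x : X => fun ε => tpow T (dotε n ε) x) :=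
      continuous_pi fun ε => tpow_continuous T _
    refine (hcl.preimage hcont).closure_subset_iff.2 ?_ (hmin y x)
    rintro _ ⟨c, rfl⟩
    refine ⟨_, subset_closure ⟨(c, n), rfl⟩, funext fun ε => ?_⟩
    change tpow T (c + dotε n ε) y = tpow T (dotε n ε) (tpow T c y)
    rw [← tpow_add_apply, add_comm]
  have hqz' : ∀ ε, q ε y = z ε := fun ε => congrFun hqz ε
  let w : (Fin d → Bool) → Function.End X := fun _ => v
  have hw : w ∈ cubeEllis T d := diag_mem_cubeEllis T d hvE
  obtain ⟨u, ⟨r, hr, hru⟩, huu⟩ := exists_idempotent_in_compact_subsemigroup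
    (pi_end_mul_right (X := X) (I := Fin d → Bool)) ((· * (q * w)) '' cubeEllis T d)
    ⟨_, w, hw, rfl⟩ (hKc.image (pi_end_mul_right _))
    (by
      rintro _ ⟨a, ha, rfl⟩ _ ⟨b, hb, rfl⟩
      exact ⟨a * (q * w) * b,
        cubeEllis_mul T d _ (cubeEllis_mul T d _ ha _ (cubeEllis_mul T d _ hq _ hw)) _ hb,
        mul_assoc _ _ _⟩)
  refine ⟨w * r, cubeEllis_mul T d _ hw _ hr, fun ε => ?_⟩
  have hu1 : u ε = r ε * (q ε * v) := (congrFun hru ε).symm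
  have hu2 : u ε * u ε = u ε := congrFun huu ε
  have huM : u ε ∈ M := by
    rw [hu1]
    exact hMl _ (cubeEllis_apply T hr ε) _ (hMl _ (cubeEllis_apply T hq ε) _ hv)
  -- `v * u ε` is an idempotent of `M` lying below `v`, hence equals `v`.
  have hmM : v * u ε ∈ M := hMl v hvE _ huM
  have hmm : (v * u ε) * (v * u ε) = v * u ε := by
    rw [mul_assoc, ← mul_assoc (u ε) v, hright _ huM, hu2]
  have hvm : v * u ε = v := by
    obtain ⟨s, -, hs⟩ := hMmin _ hmM v hv
    calc v * u ε = v * (v * u ε) := by rw [← mul_assoc, hvv]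
      _ = s * (v * u ε) * (v * u ε) := by rw [hs]
      _ = s * (v * u ε) := by rw [mul_assoc, hmm]
      _ = v := hs
  calc (w * r) ε (z ε) = v (r ε (q ε (v y))) := by rw [hvy, hqz']; rfl
    _ = (v * u ε) y := by rw [hu1]; rfl
    _ = y := by rw [hvm, hvy]

/-- The algebraic core: if two parallel faces of a point of `Q^[d+1]` agree except at their
base points `x` and `y`, then all vertices other than the one carrying `x` may be made `y`. -/
theorem corner_of_double [CompactSpace X] [T2Space X] (T : X ≃ₜ X)
    (hmin : ∀ x : X, Dense {y : X | ∃ n : ℤ, y = (T.toEquiv ^ n) x}) (d : ℕ) {x y : X}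
    {z : (Fin (d + 1) → Bool) → X} (hz : z ∈ Qcube T (d + 1))
    (hx : z (fun _ => false) = x)
    (hy : z (Fin.cons true fun _ => false : Fin (d + 1) → Bool) = y)
    (ha : ∀ ε : Fin d → Bool, ε ≠ (fun _ => false) →
      z (Fin.cons false ε : Fin (d + 1) → Bool) = z (Fin.cons true ε : Fin (d + 1) → Bool)) :
    (fun ε : Fin (d + 1) → Bool => if ∃ j, ε j = true then y else x) ∈ Qcube T (d + 1) := by
  obtain ⟨M, hME, hMc, hMne, hMl, hMmin⟩ := exists_minimal_left_ideal
    (end_mul_right (X := X)) (E := ellis T) isClosed_closure.isCompact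
    ⟨_, subset_closure ⟨0, rfl⟩⟩ (ellis_mul T)
  obtain ⟨v, hv, hvv, hvy⟩ := exists_idempotent_fixing T hmin hME hMc hMne hMl y
  obtain ⟨v', hv', hvv', hvx⟩ := exists_idempotent_fixing T hmin hME hMc hMne hMl x
  obtain ⟨p, hp, hpy⟩ := exists_collapse T hmin d hME hMl hMmin hv hvv hvy
    (Qcube_upper_face T (Qcube_diag T (hME hv) hz))
  have hz2 := Qcube_double T hp (Qcube_diag T (hME hv) hz)
  -- The element of `M` by which the base vertex of the lower face has been moved.
  have hP : p (fun _ => false) * v ∈ M := hMl _ (cubeEllis_apply T hp _) _ hv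
  have hPy : p (fun _ => false) (v y) = y := by
    have h : p (fun _ => false) (v (z (Fin.cons true fun _ => false : Fin (d + 1) → Bool))) = y :=
      hpy fun _ => false
    rwa [hy] at h
  obtain ⟨s, hs, hsP⟩ := hMmin _ hP v' hv'
  have hsP' : ∀ a, s (p (fun _ => false) (v a)) = v' a := fun a => congrFun hsP a
  -- Two idempotents of the same minimal left ideal absorb each other from the right.
  have hvv'y : v (v' y) = y := by
    obtain ⟨t, -, ht⟩ := hMmin v' hv' v hv
    have h : v * v' = v := by rw [← ht, mul_assoc, hvv']
    exact (congrFun h y).trans hvy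
  have hz4 := Qcube_punctured T (hME hv) hvv (Qcube_diag T (hME hs) hz2)
  refine (congrArg (· ∈ Qcube T (d + 1)) (funext fun ε => ?_)).mp hz4
  by_cases hε : ∃ j, ε j = true
  · rw [if_pos hε, if_pos hε]
    have h2 : p (fun i => ε i.succ) (v (z ε)) = y := by
      have hcons : (Fin.cons (ε 0) fun i => ε i.succ : Fin (d + 1) → Bool) = ε :=
        Fin.cons_self_tail ε
      have hzε : z ε = z (Fin.cons true fun i => ε i.succ : Fin (d + 1) → Bool) := by
        cases h0 : ε 0 with
        | true => rw [← h0, hcons]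
        | false =>
          rw [h0] at hcons
          rw [← ha, hcons]
          intro hc
          obtain ⟨j, hj⟩ := hε
          refine Fin.cases (fun h => ?_) (fun i h => ?_) j hj
          · rw [h0] at h; exact Bool.false_ne_true h
          · rw [show ε i.succ = false from congrFun hc i] at h
            exact Bool.false_ne_true h
      rw [hzε]
      exact hpy fun i => ε i.succ
    have h3 : s y = v' y := by rw [← hsP' y, hPy]
    rw [h2, h3, hvv'y]
  · rw [if_neg hε, if_neg hε]
    have h0 : ε = fun _ => false := by
      funext j
      by_contra h
      exact hε ⟨j, by simpa using h⟩
    subst h0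
    rw [hx, hsP', hvx]

end Cube

/-! ### From regional proximality to cubes, and back -/

section Proximal

variable {X : Type*} [MetricSpace X]

/-- A limit of the configurations witnessing regional proximality: a point of `Q^[d+1]` whose two
parallel faces agree except at their base points. The witnesses `x'` and `y'` need not lie on one
orbit, but `y'` is a limit of points of the orbit of `x'`, which suffices as `Q^[d+1]` is closed. -/
theorem exists_double_of_RP [CompactSpace X] (T : X ≃ₜ X)
    (hmin : ∀ x : X, Dense {y : X | ∃ n : ℤ, y = (T.toEquiv ^ n) x}) (d : ℕ) {x y : X}
    (h : (x, y) ∈ RP T d) :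
    ∃ z ∈ Qcube T (d + 1), z (fun _ => false) = x ∧
      z (Fin.cons true fun _ => false : Fin (d + 1) → Bool) = y ∧
      ∀ ε : Fin d → Bool, ε ≠ (fun _ => false) →
        z (Fin.cons false ε : Fin (d + 1) → Bool)
          = z (Fin.cons true ε : Fin (d + 1) → Bool) := by
  have hpos : ∀ k : ℕ, (0 : ℝ) < 1 / ((k : ℝ) + 1) := fun k => Nat.one_div_pos_of_nat
  choose x' y' n hx hy hn using fun k : ℕ => h _ (hpos k)
  let Z : ℕ → (Fin (d + 1) → Bool) → X := fun k ε =>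
    tpow T (dotε (n k) fun i => ε i.succ) (if ε 0 then y' k else x' k)
  have hZ : ∀ k, Z k ∈ Qcube T (d + 1) := by
    intro k
    have hcont : Continuous (fun b : X => fun ε : Fin (d + 1) → Bool =>
        tpow T (dotε (n k) fun i => ε i.succ) (if ε 0 then b else x' k)) := by
      refine continuous_pi fun ε => (tpow_continuous T _).comp ?_
      split_ifs
      · exact continuous_id
      · exact continuous_const
    refine ((Qcube_closed T (d + 1)).preimage hcont).closure_subset_iff.2 ?_ (hmin (x' k) (y' k))
    rintro _ ⟨c, rfl⟩
    have h := mem_Qcube_of_cube T (x' k) (Fin.cons c (n k) : Fin (d + 1) → ℤ)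
    refine (congrArg (· ∈ Qcube T (d + 1)) (funext fun ε => ?_)).mp h
    rw [dotε_cons, add_comm, tpow_add_apply]
    change _ = tpow T (dotε (n k) fun i => ε i.succ)
      (if ε 0 = true then tpow T c (x' k) else x' k)
    by_cases h0 : ε 0 = true
    · rw [if_pos h0, if_pos h0]
    · rw [if_neg h0, if_neg h0, tpow_zero]
  obtain ⟨z, hz, φ, hφ, hlim⟩ := (Qcube_closed T (d + 1)).isCompact.tendsto_subseq hZ
  have hε : ∀ ε, Tendsto (fun k => Z (φ k) ε) atTop (𝓝 (z ε)) := fun ε =>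
    (tendsto_pi_nhds.1 hlim) ε
  have hδ : Tendsto (fun k => 1 / ((φ k : ℝ) + 1)) atTop (𝓝 0) :=
    tendsto_one_div_add_atTop_nhds_zero_nat.comp hφ.tendsto_atTop
  refine ⟨z, hz, ?_, ?_, fun ε hne => ?_⟩
  · refine tendsto_nhds_unique (hε _) (tendsto_iff_dist_tendsto_zero.2 ?_)
    refine squeeze_zero (fun _ => dist_nonneg) (fun k => ?_) hδ
    have h := (hx (φ k)).le
    rw [dist_comm] at h
    simpa [Z, dotε, tpow_zero] using h
  · refine tendsto_nhds_unique (hε _) (tendsto_iff_dist_tendsto_zero.2 ?_)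
    refine squeeze_zero (fun _ => dist_nonneg) (fun k => ?_) hδ
    have h := (hy (φ k)).le
    rw [dist_comm] at h
    simpa [Z, dotε, tpow_zero] using h
  · have h1 := (hε (Fin.cons false ε)).dist (hε (Fin.cons true ε))
    refine dist_eq_zero.1 (tendsto_nhds_unique h1 ?_)
    refine squeeze_zero (fun _ => dist_nonneg) (fun k => ?_) hδ
    have h := (hn (φ k) ε hne).le
    simpa [Z, dotε, tpow] using h

theorem RP_symm (T : X ≃ₜ X) (d : ℕ) {x y : X} (h : (x, y) ∈ RP T d) : (y, x) ∈ RP T d := by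
  intro δ hδ
  obtain ⟨x', y', n, h1, h2, h3⟩ := h δ hδ
  refine ⟨y', x', n, h2, h1, fun ε hε => ?_⟩
  rw [dist_comm]
  exact h3 ε hε

/-- Reading a cube close to `(x, …, x, y)` from its last edge: with base points
`x' = T^{n₁+⋯+n_d} a` and `y' = T^{n₀+⋯+n_d} a`, the vector `-(n₁, …, n_d)` leads back to the
remaining vertices. -/
theorem RP_of_corner (T : X ≃ₜ X) (d : ℕ) {x y : X}
    (h : (fun ε : Fin (d + 1) → Bool => if ε = (fun _ => true) then y else x) ∈ Qcube T (d + 1)) :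
    (x, y) ∈ RP T d := by
  intro δ hδ
  obtain ⟨_, ⟨a, n, rfl⟩, hdist⟩ := Metric.mem_closure_iff.1 h (δ / 2) (half_pos hδ)
  have hv : ∀ ε : Fin (d + 1) → Bool,
      dist (if ε = (fun _ => true) then y else x) (tpow T (dotε n ε) a) < δ / 2 := fun ε =>
    (dist_le_pi_dist _ _ ε).trans_lt hdist
  let m : Fin d → ℤ := fun i => n i.succ
  have hval : ∀ (b : Bool) (ε : Fin d → Bool),
      tpow T (dotε (-m) ε) (tpow T ((if b then n 0 else 0) + ∑ i, m i) a)
        = tpow T (dotε n (Fin.cons b fun i => !(ε i) : Fin (d + 1) → Bool)) a := by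
    intro b ε
    rw [← tpow_add_apply]
    congr 1
    conv_rhs => rw [← Fin.cons_self_tail n, dotε_cons]
    simp only [Fin.cons_zero, Fin.cons_succ]
    rw [show Fin.tail n = m from rfl, dotε_not]
    ring
  have htop : tpow T (dotε (-m) fun _ => false) = tpow T 0 := by simp [dotε]
  refine ⟨tpow T ((if false then n 0 else 0) + ∑ i, m i) a,
    tpow T ((if true then n 0 else 0) + ∑ i, m i) a, -m, ?_, ?_, ?_⟩
  · have h1 := hval false fun _ => false
    rw [htop, tpow_zero] at h1
    have h2 := hv (Fin.cons false fun i => !false)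
    have hne : (Fin.cons false fun _ => !false : Fin (d + 1) → Bool) ≠ fun _ => true := fun hc =>
      Bool.false_ne_true (congrFun hc 0)
    rw [if_neg hne] at h2
    have h3 := h2.trans (half_lt_self hδ)
    rw [← h1] at h3
    exact h3
  · have h1 := hval true fun _ => false
    rw [htop, tpow_zero] at h1
    have h2 := hv (Fin.cons true fun i => !false)
    have heq : (Fin.cons true fun _ => !false : Fin (d + 1) → Bool) = fun _ => true := by
      funext j
      refine Fin.cases rfl (fun i => rfl) j
    rw [if_pos heq] at h2
    have h3 := h2.trans (half_lt_self hδ)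
    rw [← h1] at h3
    exact h3
  · intro ε hε
    have hne : ∀ b : Bool,
        (Fin.cons b fun i => !(ε i) : Fin (d + 1) → Bool) ≠ fun _ => true := by
      intro b hc
      apply hε
      funext i
      have h := congrFun hc i.succ
      simpa using h
    have h0 := hv (Fin.cons false fun i => !(ε i))
    have h1 := hv (Fin.cons true fun i => !(ε i))
    rw [if_neg (hne _), ← hval] at h0 h1
    have h2 := dist_triangle_left
      (tpow T (dotε (-m) ε) (tpow T ((if false then n 0 else 0) + ∑ i, m i) a))
      (tpow T (dotε (-m) ε) (tpow T ((if true then n 0 else 0) + ∑ i, m i) a)) x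
    have h3 := h2.trans_lt (add_lt_add h0 h1)
    rw [add_halves] at h3
    exact h3

end Proximal

theorem RP_iff_last_corner_in_Q {X : Type*} [MetricSpace X] [CompactSpace X]
    (T : X ≃ₜ X)
    (hmin : ∀ x : X, Dense {y : X | ∃ n : ℤ, y = (T.toEquiv ^ n) x})
    (d : ℕ) (hd : 1 ≤ d) (x y : X) :
    (x, y) ∈ RP T d ↔
      (fun ε : Fin (d + 1) → Bool =>
        if ε = (fun _ => true) then y else x) ∈ Qcube T (d + 1) := by
  refine ⟨fun h => ?_, RP_of_corner T d⟩
  -- The collapsing step puts the distinguished point at the vertex `0`; interchanging the roles of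
  -- `x` and `y` and reflecting the cube moves it to the vertex `1`.
  obtain ⟨z, hz, hy, hx, ha⟩ := exists_double_of_RP T hmin d (RP_symm T d h)
  have hcorner := Qcube_reflect T (corner_of_double T hmin d hz hy hx ha)
  refine (congrArg (· ∈ Qcube T (d + 1)) (funext fun ε => ?_)).mp hcorner
  by_cases hε : ε = fun _ => true
  · subst hε
    simp
  · rw [if_neg hε, if_pos]
    by_contra hc
    apply hε
    funext j
    by_contra hj
    exact hc ⟨j, by simpa using hj⟩
end
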